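/- For every real constant δ > 0 and every integer k ≥ 2 there exists a constant C (depending only on δ and k) such that: for every finite undirected unweighted simple graph G on n vertices there is a subgraph H ⊆ G with at most C · n^(1 + (1+δ)/(2^(k+1) − 1)) edges such that for every pair of vertices u, v connected in G, dist_H(u,v) ≤ dist_G(u,v) + C · (dist_G(u,v))^(1 − 1/k). -/

import Mathlib

/-!
Fix a scale parameter `R` and treat the scales `r = R ^ i`, `i ≤ k`, in turn. The invariant is that
every pair at distance at most `r` can be given additive error `O(r / R)` at the price of `lam`
further edges per vertex of a ball of radius `O(r)`. To pass from `r` to `R * r`, concatenate such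
paths along a geodesic and add to the spanner, as long as possible, the edges of any route that pays
for itself by improving the approximation of many nearby pairs. When nothing pays for itself any
more, an expensive route must contain two vertices, far apart along it, that are already well
approximated; a shortcut between them, with detours through a multiplicative spanner, keeps the
error under control and shrinks the price by a polynomial factor, so that after boundedly many
shortcuts the route is cheap. The price `lam` is squared at each scale, whence the exponent
`2 ^ (k + 1) - 1`: after `k` scales it is less than one edge. The spanner is the union of the
subgraphs obtained for `R = 2 ^ j`.
-/

universe u

namespace AdditiveSpanner

open Finset

variable {V : Type u} {G F H : SimpleGraph V} {a b g l M : ℕ} {u v w x y : V}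

/-- The vertices `x` and `y` are joined by a path of at most `l` edges of `G`. -/
def Within (G : SimpleGraph V) (l : ℕ) (x y : V) : Prop :=
  G.edist x y ≤ l

namespace Within

theorem refl (G : SimpleGraph V) (l : ℕ) (x : V) : Within G l x x := by
  simp [Within]

theorem trans (h : Within G a x y) (h' : Within G b y w) : Within G (a + b) x w := by
  refine G.edist_triangle.trans ((add_le_add h h').trans_eq ?_)
  norm_cast

theorem symm (h : Within G a x y) : Within G a y x := by
  rwa [Within, SimpleGraph.edist_comm]

theorem mono (h : Within G a x y) (hab : a ≤ b) : Within G b x y :=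
  le_trans h (by exact_mod_cast hab)

theorem mono_graph (h : Within G a x y) (hGH : G ≤ H) : Within H a x y :=
  (SimpleGraph.edist_anti hGH).trans h

theorem reachable (h : Within G a x y) : G.Reachable x y :=
  SimpleGraph.reachable_of_edist_ne_top (ne_top_of_le_ne_top (ENat.natCast_ne_top a) h)

theorem dist_le (h : Within G a x y) : G.dist x y ≤ a := by
  have hr := h.reachable
  rw [Within, ← hr.coe_dist_eq_edist] at h
  exact_mod_cast h

theorem of_reachable (h : G.Reachable x y) : Within G (G.dist x y) x y :=
  h.coe_dist_eq_edist.ge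

theorem of_adj (h : G.Adj x y) : Within G 1 x y := by
  simp [Within, SimpleGraph.edist_eq_one_iff_adj.2 h]

theorem eq_of_zero (h : Within G 0 x y) : x = y := by
  simpa [Within] using h

theorem eq_or_adj (h : Within G 1 x y) : x = y ∨ G.Adj x y :=
  (SimpleGraph.edist_le_one_iff_adj_or_eq.1 (by simpa [Within] using h)).symm

theorem of_walk (p : G.Walk x y) : Within G p.length x y :=
  SimpleGraph.edist_le p

theorem exists_walk (h : Within G a x y) : ∃ p : G.Walk x y, p.length ≤ a := by
  obtain ⟨p, hp⟩ := h.reachable.exists_walk_length_eq_dist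
  exact ⟨p, hp.trans_le h.dist_le⟩

theorem exists_adj_of_succ (h : Within G (l + 1) x y) (hne : x ≠ y) :
    ∃ w, Within G l x w ∧ G.Adj w y := by
  obtain ⟨p, hp⟩ := h.exists_walk
  have hnil : ¬ p.Nil := SimpleGraph.Walk.not_nil_of_ne hne
  refine ⟨p.penultimate, (of_walk p.dropLast).mono ?_, p.adj_penultimate hnil⟩
  rw [SimpleGraph.Walk.length_dropLast]
  omega

end Within

/-- Distances between `u` and `v` in `F` exceed those in `G` by at most `g`. When `v` is not
reachable from `u` in `G`, the junk value `G.dist u v = 0` makes this false for `F ≤ G`. -/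
def ApproxDist (G F : SimpleGraph V) (g : ℕ) (u v : V) : Prop :=
  Within F (G.dist u v + g) u v

/-- `F` is a multiplicative `M`-spanner of `G`, expressed on the edges of `G`. -/
def IsSpanner (G F : SimpleGraph V) (M : ℕ) : Prop :=
  ∀ ⦃u v⦄, G.Adj u v → Within F M u v

theorem IsSpanner.mono_graph (h : IsSpanner G F M) (hFH : F ≤ H) : IsSpanner G H M :=
  fun _ _ huv => (h huv).mono_graph hFH

theorem IsSpanner.within (hF : IsSpanner G F M) (h : Within G a x y) : Within F (M * a) x y := by
  obtain ⟨p, hp⟩ := h.exists_walk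
  suffices Within F (M * p.length) x y from this.mono (Nat.mul_le_mul_left M hp)
  clear hp h
  induction p with
  | nil => exact .refl F _ _
  | cons hadj p ih =>
    rw [SimpleGraph.Walk.length_cons, mul_add_one, add_comm]
    exact (hF hadj).trans ih

theorem exists_geodesic {s t : V} (h : G.Reachable s t) :
    ∃ y : ℕ → V, y 0 = s ∧ (∀ i, G.dist s t ≤ i → y i = t) ∧ ∀ i j, i ≤ j →
      G.Reachable (y i) (y j) ∧ G.dist (y i) (y j) = min j (G.dist s t) - min i (G.dist s t) := by
  obtain ⟨p, hp⟩ := h.exists_walk_length_eq_dist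
  refine ⟨p.getVert, p.getVert_zero, fun i hi => p.getVert_of_length_le (by omega), ?_⟩
  intro i j hij
  have hend : (p.drop i).getVert (j - i) = p.getVert j := by
    rw [SimpleGraph.Walk.drop_getVert, Nat.add_sub_cancel' hij]
  have hdist := SimpleGraph.length_eq_dist_of_subwalk hp
    (((p.drop i).isSubwalk_take (j - i)).trans (p.isSubwalk_drop i))
  rw [SimpleGraph.Walk.take_length, SimpleGraph.Walk.drop_length, hend] at hdist
  refine ⟨hend ▸ ((p.drop i).take (j - i)).reachable, ?_⟩
  omega

theorem ncard_edgeSet_sup_le (F H : SimpleGraph V) :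
    (F ⊔ H).edgeSet.ncard ≤ F.edgeSet.ncard + H.edgeSet.ncard := by
  rw [SimpleGraph.edgeSet_sup]
  exact Set.ncard_union_le _ _

theorem ncard_edgeSet_fromEdgeSet_le (s : Finset (Sym2 V)) :
    (SimpleGraph.fromEdgeSet (s : Set (Sym2 V))).edgeSet.ncard ≤ #s := by
  rw [SimpleGraph.edgeSet_fromEdgeSet, ← Set.ncard_coe_finset]
  exact Set.ncard_le_ncard Set.sdiff_subset s.finite_toSet

theorem fromEdgeSet_le_of_subset {s : Set (Sym2 V)} (h : s ⊆ G.edgeSet) :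
    SimpleGraph.fromEdgeSet s ≤ G := by
  simpa using SimpleGraph.fromEdgeSet_mono h

theorem ncard_edgeSet_biSup_le {ι : Type*} (s : Finset ι) (f : ι → SimpleGraph V) :
    (⨆ i ∈ s, f i).edgeSet.ncard ≤ ∑ i ∈ s, (f i).edgeSet.ncard := by
  simp only [SimpleGraph.edgeSet_iSup]
  exact s.set_ncard_biUnion_le _

section closedBall

variable [Fintype V]

open scoped Classical in
/-- The set of vertices at distance at most `ρ` from `s`; unlike `SimpleGraph.ball`, it is closed,
and bundled as a `Finset`. -/
noncomputable def closedBall (G : SimpleGraph V) (ρ : ℕ) (s : V) : Finset V :=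
  {v | Within G ρ s v}

theorem mem_closedBall : v ∈ closedBall G a u ↔ Within G a u v := by
  simp [closedBall]

theorem self_mem_closedBall : u ∈ closedBall G a u :=
  mem_closedBall.2 (.refl G a u)

theorem card_closedBall_pos : 0 < (#(closedBall G a u) : ℝ) := by
  exact_mod_cast card_pos.2 ⟨u, self_mem_closedBall⟩

theorem closedBall_subset (h : ∀ w, Within G a u w → Within G b v w) :
    closedBall G a u ⊆ closedBall G b v :=
  fun w hw => mem_closedBall.2 (h w (mem_closedBall.1 hw))

/-- A breadth-first search tree of the ball. -/
theorem exists_spanning_closedBall (G : SimpleGraph V) (ρ : ℕ) (s : V) :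
    ∃ T ≤ G, T.edgeSet.ncard ≤ #(closedBall G ρ s) ∧ ∀ v ∈ closedBall G ρ s, Within T ρ s v := by
  classical
  have hparent : ∀ w, ∃ p, G.Reachable s w → s ≠ w → Within G (G.dist s w - 1) s p ∧ G.Adj p w := by
    intro w
    by_cases h : G.Reachable s w ∧ s ≠ w
    · have hpos := h.1.pos_dist_of_ne h.2
      obtain ⟨p, hp⟩ := ((Within.of_reachable h.1).mono (by omega :
        _ ≤ G.dist s w - 1 + 1)).exists_adj_of_succ h.2
      exact ⟨p, fun _ _ => hp⟩
    · exact ⟨w, fun h₁ h₂ => absurd ⟨h₁, h₂⟩ h⟩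
  choose parent hparent using hparent
  let edges : Finset (Sym2 V) := ((closedBall G ρ s).erase s).image fun w => s(parent w, w)
  have hadj : ∀ w ∈ closedBall G ρ s, s ≠ w →
      (SimpleGraph.fromEdgeSet (edges : Set (Sym2 V))).Adj (parent w) w := fun w hw hne =>
    (SimpleGraph.fromEdgeSet_adj _).2 ⟨mod_cast mem_image_of_mem _ (mem_erase.2 ⟨hne.symm, hw⟩),
      (hparent w (mem_closedBall.1 hw).reachable hne).2.ne⟩
  refine ⟨.fromEdgeSet edges, fromEdgeSet_le_of_subset ?_, ?_, fun v hv => ?_⟩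
  · intro e he
    obtain ⟨w, hw, rfl⟩ := mem_image.1 (mem_coe.1 he)
    rw [mem_erase] at hw
    exact (hparent w (mem_closedBall.1 hw.2).reachable hw.1.symm).2
  · exact (ncard_edgeSet_fromEdgeSet_le _).trans
      (card_image_le.trans (card_le_card (erase_subset _ _)))
  · suffices ∀ l ≤ ρ, ∀ w, Within G l s w →
        Within (.fromEdgeSet (edges : Set (Sym2 V))) l s w from
      this ρ le_rfl v (mem_closedBall.1 hv)
    intro l
    induction l with
    | zero => exact fun _ w hw => hw.eq_of_zero ▸ .refl _ _ _
    | succ l ih =>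
      intro hl w hw
      rcases eq_or_ne s w with rfl | hne
      · exact .refl _ _ _
      have hclose := (hparent w hw.reachable hne).1.mono (b := l) (by have := hw.dist_le; omega)
      exact (ih (by omega) _ hclose).trans
        (.of_adj (hadj w (mem_closedBall.2 (hw.mono hl)) hne))

end closedBall

section Completable

theorem exists_lt_succ_le_mul {a : ℕ → ℝ} {z : ℝ} {t : ℕ} (ha : 1 ≤ a 0) (hz : 0 ≤ z) (ht : 0 < t)
    (hat : a t ≤ z ^ t) : ∃ i < t, a (i + 1) ≤ z * a i := by
  by_contra! hgrow
  have hpow : ∀ i ≤ t, z ^ i ≤ a i := by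
    intro i
    induction i with
    | zero => simpa using ha
    | succ i ih =>
      intro hi
      rw [pow_succ']
      exact (mul_le_mul_of_nonneg_left (ih (by omega)) hz).trans (hgrow i hi).le
  obtain ⟨j, rfl⟩ := Nat.exists_eq_add_one.2 ht
  have hlt := hgrow j (by omega)
  have hle := mul_le_mul_of_nonneg_left (hpow j (by omega)) hz
  rw [pow_succ'] at hat
  linarith

theorem mem_of_within_spanningCoe {S : Finset V} (hu : u ∈ S)
    (h : Within (G.induce (S : Set V)).spanningCoe l u v) : v ∈ S := by
  rcases eq_or_ne u v with rfl | hne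
  · exact hu
  obtain ⟨w, -, hwv⟩ := (h.mono l.le_succ).exists_adj_of_succ hne
  have hadj : G.Adj w v ∧ w ∈ S ∧ v ∈ S := by simpa using hwv
  exact hadj.2.2

variable [Fintype V]

theorem exists_closedBall_card_succ_le (G : SimpleGraph V) (v : V) {z : ℝ} {t : ℕ} (hz : 0 ≤ z)
    (ht : 0 < t) (hn : (Fintype.card V : ℝ) ≤ z ^ t) :
    ∃ i < t, (#(closedBall G (i + 1) v) : ℝ) ≤ z * #(closedBall G i v) := by
  refine exists_lt_succ_le_mul (a := fun i => #(closedBall G i v)) ?_ hz ht (hn.trans' ?_)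
  · exact_mod_cast card_pos.2 ⟨v, self_mem_closedBall⟩
  · exact_mod_cast card_le_univ _

/-- Ball carving: a ball of `G[S]` whose size grows by a factor of at most `z` when its radius is
increased by one is spanned by a tree, and the remaining vertices are treated recursively. -/
theorem exists_spanner_on (G : SimpleGraph V) {z : ℝ} {t : ℕ} (hz : 0 ≤ z) (ht : 0 < t)
    (hn : (Fintype.card V : ℝ) ≤ z ^ t) (S : Finset V) :
    ∃ T ≤ G, (T.edgeSet.ncard : ℝ) ≤ z * #S ∧
      ∀ u ∈ S, ∀ v ∈ S, G.Adj u v → Within T (2 * t) u v := by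
  classical
  induction S using Finset.strongInduction with
  | H S ih =>
    rcases S.eq_empty_or_nonempty with rfl | ⟨c, hc⟩
    · exact ⟨⊥, bot_le, by simp, by simp⟩
    let GS := (G.induce (S : Set V)).spanningCoe
    obtain ⟨i, hi, hgrow⟩ := exists_closedBall_card_succ_le GS c hz ht hn
    obtain ⟨T, hTG, hT, hTc⟩ := exists_spanning_closedBall GS (i + 1) c
    let B := closedBall GS i c
    have hBS : B ⊆ S := fun v hv => mem_of_within_spanningCoe hc (mem_closedBall.1 hv)
    obtain ⟨T', hTG', hT', hspan⟩ := ih (S \ B) (sdiff_ssubset hBS ⟨c, self_mem_closedBall⟩)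
    refine ⟨T ⊔ T', sup_le (hTG.trans (G.spanningCoe_induce_le _)) hTG', ?_, ?_⟩
    · calc ((T ⊔ T').edgeSet.ncard : ℝ) ≤ T.edgeSet.ncard + T'.edgeSet.ncard :=
            mod_cast ncard_edgeSet_sup_le T T'
        _ ≤ z * #B + z * #(S \ B) := add_le_add (hgrow.trans' (mod_cast hT)) hT'
        _ = z * #S := by
            rw [← mul_add, add_comm, ← Nat.cast_add, card_sdiff_add_card_eq_card hBS]
    · have hball : ∀ u ∈ B, ∀ v ∈ S, G.Adj u v → Within (T ⊔ T') (2 * t) u v := by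
        intro u hu v hv huv
        have hcu := mem_closedBall.1 hu
        have huvS : GS.Adj u v := by simp [GS, huv, hBS hu, hv]
        exact (((hTc u (mem_closedBall.2 (hcu.mono (by omega)))).symm.trans
          (hTc v (mem_closedBall.2 (hcu.trans (.of_adj huvS))))).mono (by omega)).mono_graph
            le_sup_left
      intro u hu v hv huv
      by_cases huB : u ∈ B
      · exact hball u huB v hv huv
      by_cases hvB : v ∈ B
      · exact (hball v hvB u hu huv.symm).symm
      · exact (hspan u (mem_sdiff.2 ⟨hu, huB⟩) v (mem_sdiff.2 ⟨hv, hvB⟩) huv).mono_graph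
          le_sup_right

theorem exists_isSpanner (G : SimpleGraph V) {z : ℝ} {t : ℕ} (hz : 0 ≤ z) (ht : 0 < t)
    (hn : (Fintype.card V : ℝ) ≤ z ^ t) :
    ∃ T ≤ G, (T.edgeSet.ncard : ℝ) ≤ z * Fintype.card V ∧ IsSpanner G T (2 * t) := by
  obtain ⟨T, hTG, hT, hspan⟩ := exists_spanner_on G hz ht hn univ
  exact ⟨T, hTG, hT, fun u v => hspan u (mem_univ u) v (mem_univ v)⟩

theorem exists_spanner_small_closedBalls (G : SimpleGraph V) (ρ : ℕ) {y : ℝ} (hy : 0 ≤ y) :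
    ∃ L ≤ G, (L.edgeSet.ncard : ℝ) ≤ Fintype.card V * y ∧
      ∀ u v, #(closedBall G ρ u) ≤ y → Within G ρ u v → Within L ρ u v := by
  classical
  choose T hTG hT hspan using exists_spanning_closedBall G ρ
  let S : Finset V := {u | #(closedBall G ρ u) ≤ y}
  refine ⟨⨆ u ∈ S, T u, iSup₂_le fun u _ => hTG u, ?_, fun u v hu huv => ?_⟩
  · calc ((⨆ u ∈ S, T u).edgeSet.ncard : ℝ) ≤ ∑ u ∈ S, ((T u).edgeSet.ncard : ℝ) :=
          mod_cast ncard_edgeSet_biSup_le S T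
      _ ≤ ∑ _u ∈ S, y := sum_le_sum fun u hu =>
          le_trans (mod_cast hT u) (mem_filter.1 hu).2
      _ ≤ Fintype.card V * y := by
          rw [sum_const, nsmul_eq_mul]
          gcongr
          exact card_le_univ S
  · exact (hspan u v (mem_closedBall.2 huv)).mono_graph
      (le_iSup₂_of_le u (mem_filter.2 ⟨mem_univ u, hu⟩) le_rfl)

/-- Relative to the partial spanner `F`, every pair `s`, `t` at distance at most `r` can be given
additive error `e` by adding at most `lam * #(closedBall G ρ s)` further edges of `G`. -/
def Completable (G F : SimpleGraph V) (r e ρ : ℕ) (lam : ℝ) : Prop :=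
  ∀ ⦃s t⦄, Within G r s t → ∃ E ≤ G, (E.edgeSet.ncard : ℝ) ≤ lam * #(closedBall G ρ s) ∧
    ApproxDist G (F ⊔ E) e s t

namespace Completable

variable {r e ρ ρ' : ℕ} {lam : ℝ} {s t : V}

theorem mono_graph (h : Completable G F r e ρ lam) (hFH : F ≤ H) :
    Completable G H r e ρ lam := fun _ _ hst =>
  let ⟨E, hEG, hE, happrox⟩ := h hst
  ⟨E, hEG, hE, happrox.mono_graph (sup_le_sup_right hFH E)⟩

theorem mono_radius (h : Completable G F r e ρ lam) (hlam : 0 ≤ lam) (hρ : ρ ≤ ρ') :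
    Completable G F r e ρ' lam := fun s _ hst =>
  let ⟨E, hEG, hE, happrox⟩ := h hst
  have hball : #(closedBall G ρ s) ≤ #(closedBall G ρ' s) :=
    card_le_card (closedBall_subset fun _ hw => hw.mono hρ)
  ⟨E, hEG, hE.trans (by gcongr), happrox⟩

theorem approxDist (h : Completable G F r e ρ lam) (hlam : 0 ≤ lam)
    (hlt : lam * Fintype.card V < 1) (hst : Within G r s t) : ApproxDist G F e s t := by
  obtain ⟨E, -, hE, happrox⟩ := h hst
  have hcard : (E.edgeSet.ncard : ℝ) < 1 := hE.trans_lt <| hlt.trans_le' <| by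
    gcongr
    exact card_le_univ _
  have hzero : E.edgeSet.ncard = 0 := Nat.lt_one_iff.1 (mod_cast hcard)
  rw [Set.ncard_eq_zero, SimpleGraph.edgeSet_eq_empty] at hzero
  rwa [hzero, sup_bot_eq] at happrox

end Completable

theorem exists_completable_one (G : SimpleGraph V) {y : ℝ} (hy : 0 < y) :
    ∃ L ≤ G, (L.edgeSet.ncard : ℝ) ≤ Fintype.card V * y ∧
      ∀ F, L ≤ F → Completable G F 1 0 1 y⁻¹ := by
  obtain ⟨L, hLG, hL, hspan⟩ := exists_spanner_small_closedBalls G 1 hy.le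
  refine ⟨L, hLG, hL, fun F hLF s t hst => ?_⟩
  have hnonneg : 0 ≤ y⁻¹ * #(closedBall G 1 s) := by positivity
  rcases hst.eq_or_adj with rfl | hadj
  · exact ⟨⊥, bot_le, by simpa using hnonneg, .refl _ _ _⟩
  have hdist : G.dist s t + 0 = 1 := SimpleGraph.dist_eq_one_iff_adj.2 hadj
  rcases le_total (#(closedBall G 1 s) : ℝ) y with hs | hs
  · refine ⟨⊥, bot_le, by simpa using hnonneg, ?_⟩
    rw [ApproxDist, hdist]
    exact (hspan s t hs hst).mono_graph (hLF.trans le_sup_left)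
  · refine ⟨.edge s t, (SimpleGraph.edge_le_iff _).2 (.inr hadj), ?_, ?_⟩
    · rw [SimpleGraph.edgeSet_edge_of_ne hadj.ne, Set.ncard_singleton, inv_mul_eq_div,
        le_div_iff₀ hy]
      simpa using hs
    · rw [ApproxDist, hdist]
      refine .of_adj (.inr ?_)
      simp [SimpleGraph.edge_adj, hadj.ne]

end Completable

section Routes

variable {lam : ℝ} {ρ K m : ℕ} {s t : V}

/-- One leg of a route from `s` to `t`: a path of length at most `len` from `src` to `tgt` that
uses, besides `F`, the edges of `extra`. The number of these additional edges is charged to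
`cloud`, a set of vertices near both ends of the leg. -/
structure Leg (G F : SimpleGraph V) (lam : ℝ) (ρ : ℕ) where
  src : V
  tgt : V
  len : ℕ
  extra : SimpleGraph V
  cloud : Finset V
  within_len : Within (F ⊔ extra) len src tgt
  extra_le : extra ≤ G
  ncard_extra_le : (extra.edgeSet.ncard : ℝ) ≤ lam * #cloud
  within_src : ∀ v ∈ cloud, Within G ρ src v
  within_tgt : ∀ v ∈ cloud, Within G ρ tgt v

/-- A leg inside `F`, which needs no additional edges. -/
def Leg.ofWithin (h : Within F l x y) : Leg G F lam ρ where
  src := x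
  tgt := y
  len := l
  extra := ⊥
  cloud := ∅
  within_len := h.mono_graph le_sup_left
  extra_le := bot_le
  ncard_extra_le := by simp
  within_src := by simp
  within_tgt := by simp

/-- The legs of a list are consecutive and lead from `x` to `y`. -/
def Connects (x y : V) : List (Leg G F lam ρ) → Prop
  | [] => x = y
  | l :: L => x = l.src ∧ Connects l.tgt y L

/-- The sum of the lengths of the legs. -/
def totalLen (L : List (Leg G F lam ρ)) : ℕ :=
  (L.map Leg.len).sum

/-- The sum of the sizes of the clouds, which controls the cost of the additional edges. -/
def weight (L : List (Leg G F lam ρ)) : ℕ :=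
  (L.map fun l => #l.cloud).sum

/-- All the additional edges used by a list of legs. -/
def extras (L : List (Leg G F lam ρ)) : SimpleGraph V :=
  ⨆ l ∈ L, l.extra

variable {L L₁ L₂ : List (Leg G F lam ρ)} {i j : ℕ}

theorem weight_append : weight (L₁ ++ L₂) = weight L₁ + weight L₂ := by
  simp [weight]

theorem totalLen_append : totalLen (L₁ ++ L₂) = totalLen L₁ + totalLen L₂ := by
  simp [totalLen]

theorem weight_mono (h : L₁.Sublist L₂) : weight L₁ ≤ weight L₂ :=
  (h.map _).sum_le_sum fun _ _ => Nat.zero_le _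

theorem extras_le : extras L ≤ G :=
  iSup₂_le fun l _ => l.extra_le

theorem extra_le_extras {l : Leg G F lam ρ} (h : l ∈ L) : l.extra ≤ extras L :=
  le_iSup₂_of_le l h le_rfl

theorem ncard_extras_le : ((extras L).edgeSet.ncard : ℝ) ≤ lam * weight L := by
  induction L with
  | nil => simp [extras, weight]
  | cons l L ih =>
    have hcons : extras (l :: L) = l.extra ⊔ extras L := by
      simp [extras, iSup_or, iSup_sup_eq]
    calc ((extras (l :: L)).edgeSet.ncard : ℝ)
        ≤ l.extra.edgeSet.ncard + (extras L).edgeSet.ncard := by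
          rw [hcons]
          exact_mod_cast ncard_edgeSet_sup_le _ _
      _ ≤ lam * #l.cloud + lam * weight L := add_le_add l.ncard_extra_le ih
      _ = lam * weight (l :: L) := by simp [weight, mul_add]

namespace Connects

theorem append_iff : Connects x y (L₁ ++ L₂) ↔ ∃ w, Connects x w L₁ ∧ Connects w y L₂ := by
  induction L₁ generalizing x with
  | nil => simp [Connects]
  | cons l L₁ ih => simp [Connects, ih, and_assoc]

theorem within (h : Connects x y L) (hFH : F ≤ H) (hH : ∀ l ∈ L, l.extra ≤ H) :
    Within H (totalLen L) x y := by
  induction L generalizing x with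
  | nil => exact h ▸ .refl H _ x
  | cons l L ih =>
    rw [List.forall_mem_cons] at hH
    obtain ⟨rfl, hL⟩ := h
    simpa [totalLen] using (l.within_len.mono_graph (sup_le hFH hH.1)).trans (ih hL hH.2)

theorem within_extras (h : Connects x y L) : Within (F ⊔ extras L) (totalLen L) x y :=
  h.within le_sup_left fun _ hl => (extra_le_extras hl).trans le_sup_right

theorem within_of_le (h : Connects x y L) (hFG : F ≤ G) : Within G (totalLen L) x y :=
  h.within hFG fun l _ => l.extra_le

theorem take_drop (h : Connects x y L) (hi : i < L.length) :
    Connects x L[i].src (L.take i) ∧ Connects L[i].src y (L.drop i) := by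
  obtain ⟨w, hw, hw'⟩ := append_iff.1 ((L.take_append_drop i).symm ▸ h)
  rw [List.drop_eq_getElem_cons hi] at hw' ⊢
  exact ⟨hw'.1 ▸ hw, rfl, hw'.2⟩

theorem take_drop_succ (h : Connects x y L) (hi : i < L.length) :
    Connects x L[i].tgt (L.take (i + 1)) ∧ Connects L[i].tgt y (L.drop (i + 1)) := by
  have h' := h.take_drop hi
  rw [List.drop_eq_getElem_cons hi] at h'
  refine ⟨?_, h'.2.2⟩
  rw [List.take_succ_eq_append_getElem hi, append_iff]
  exact ⟨_, h'.1, rfl, rfl⟩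

end Connects

open scoped Classical in
/-- The list `L` leads from `s` to `t` with additive error at most `K`, and every vertex lies in at
most `m` clouds. -/
structure IsRoute (K m : ℕ) (s t : V) (L : List (Leg G F lam ρ)) : Prop where
  connects : Connects s t L
  totalLen_le : totalLen L ≤ G.dist s t + K
  countP_le : ∀ v, L.countP (fun l => v ∈ l.cloud) ≤ m

namespace IsRoute

theorem mono {K' : ℕ} (hL : IsRoute K m s t L) (hK : K ≤ K') : IsRoute K' m s t L :=
  ⟨hL.connects, hL.totalLen_le.trans (by gcongr), hL.countP_le⟩

theorem approxDist (hL : IsRoute K m s t L) : ApproxDist G (F ⊔ extras L) K s t :=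
  hL.connects.within_extras.mono hL.totalLen_le

theorem exists_middle (hL : IsRoute K m s t L) (hij : i ≤ j) (hj : j < L.length) :
    ∃ N, N.Sublist L ∧ Connects (L[i]'(hij.trans_lt hj)).src L[j].tgt N ∧
      totalLen (L.take i) + totalLen N + totalLen (L.drop (j + 1)) = totalLen L := by
  refine ⟨(L.take (j + 1)).drop i, (List.drop_sublist _ _).trans (List.take_sublist _ _), ?_, ?_⟩
  · have h := ((hL.connects.take_drop_succ hj).1.take_drop (i := i)
      (by rw [List.length_take]; omega)).2
    rwa [List.getElem_take] at h
  · have htake : L.take i = (L.take (j + 1)).take i := by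
      rw [List.take_take, min_eq_left (by omega)]
    rw [htake, ← totalLen_append, List.take_append_drop, ← totalLen_append, List.take_append_drop]

theorem exists_sections (hL : IsRoute K m s t L) (hFG : F ≤ G) (hij : i ≤ j) (hj : j < L.length)
    (hu : u ∈ (L[i]'(hij.trans_lt hj)).cloud) (hv : v ∈ L[j].cloud) :
    ∃ N, N.Sublist L ∧ Connects (L[i]'(hij.trans_lt hj)).src L[j].tgt N ∧
      Within G (totalLen (L.take i) + ρ) s u ∧ Within G (totalLen N + 2 * ρ) u v ∧
      totalLen (L.take i) + totalLen N + totalLen (L.drop (j + 1)) ≤ G.dist s t + K ∧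
      totalLen N ≤ G.dist u v + K + 2 * ρ := by
  obtain ⟨N, hNL, hN, hsum⟩ := hL.exists_middle hij hj
  have hi := hij.trans_lt hj
  have hsu := ((hL.connects.take_drop hi).1.within_of_le hFG).trans (L[i].within_src u hu)
  have huv := ((L[i].within_src u hu).symm.trans (hN.within_of_le hFG)).trans
    (L[j].within_tgt v hv)
  have hvt := (L[j].within_tgt v hv).symm.trans
    ((hL.connects.take_drop_succ hj).2.within_of_le hFG)
  have hst := ((hsu.trans (.of_reachable huv.reachable)).trans hvt).dist_le
  have hlen := hL.totalLen_le
  exact ⟨N, hNL, hN, hsu, huv.mono (by omega), by omega, by omega⟩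

theorem within_of_mem_clouds (hL : IsRoute K m s t L) (hFG : F ≤ G) (hij : i ≤ j)
    (hj : j < L.length) (hu : u ∈ (L[i]'(hij.trans_lt hj)).cloud) (hv : v ∈ L[j].cloud) :
    Within G (G.dist s t + K + ρ) s u ∧ Within G (G.dist s t + K + 2 * ρ) u v := by
  obtain ⟨N, -, -, hsu, huv, hsum, -⟩ := hL.exists_sections hFG hij hj hu hv
  exact ⟨hsu.mono (by omega), huv.mono (by omega)⟩

theorem approxDist_of_mem_clouds (hL : IsRoute K m s t L) (hFG : F ≤ G) (hF : IsSpanner G F M)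
    (hij : i ≤ j) (hj : j < L.length) (hu : u ∈ (L[i]'(hij.trans_lt hj)).cloud)
    (hv : v ∈ L[j].cloud) :
    ApproxDist G (F ⊔ extras L) (K + 2 * ρ + 2 * (M * ρ)) u v := by
  obtain ⟨N, hNL, hN, -, -, -, hlen⟩ := hL.exists_sections hFG hij hj hu hv
  have hF' := hF.mono_graph (le_sup_left : F ≤ F ⊔ extras L)
  have hN' := hN.within (le_sup_left : F ≤ F ⊔ extras L) fun l hl =>
    (extra_le_extras (hNL.subset hl)).trans le_sup_right
  exact (((hF'.within (L[i].within_src u hu)).symm.trans hN').trans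
    (hF'.within (L[j].within_tgt v hv))).mono (by omega)

theorem exists_shortcut (hL : IsRoute K m s t L) (hFG : F ≤ G) (hF : IsSpanner G F M)
    (hij : i ≤ j) (hj : j < L.length) (hu : u ∈ (L[i]'(hij.trans_lt hj)).cloud)
    (hv : v ∈ L[j].cloud) (huv : ApproxDist G F (K + 2 * ρ + 2 * (M * ρ)) u v) :
    ∃ L' : List (Leg G F lam ρ), IsRoute (2 * K + 4 * ((M + 1) * ρ)) m s t L' ∧
      weight L' = weight (L.take i) + weight (L.drop (j + 1)) := by
  obtain ⟨N, -, -, -, huvG, hsum, -⟩ := hL.exists_sections hFG hij hj hu hv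
  have hi := hij.trans_lt hj
  have hdist := huvG.dist_le
  let new : Leg G F lam ρ := .ofWithin (((hF.within (L[i].within_src u hu)).trans huv).trans
    (hF.within (L[j].within_tgt v hv)).symm)
  have hsub : (L.take i ++ L.drop (j + 1)).Sublist L := by
    conv_rhs => rw [← L.take_append_drop i]
    exact (List.Sublist.refl _).append (List.drop_sublist_drop_left _ (by omega))
  refine ⟨L.take i ++ new :: L.drop (j + 1), ⟨?_, ?_, fun v => ?_⟩, ?_⟩
  · exact Connects.append_iff.2
      ⟨_, (hL.connects.take_drop hi).1, rfl, (hL.connects.take_drop_succ hj).2⟩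
  · have hnew : totalLen (new :: L.drop (j + 1)) = new.len + totalLen (L.drop (j + 1)) := by
      simp [totalLen]
    rw [totalLen_append, hnew, add_mul, mul_add]
    simp only [new, Leg.ofWithin]
    omega
  · refine (hsub.countP_le.trans' ?_).trans (hL.countP_le v)
    simp [List.countP_append, new, Leg.ofWithin]
  · simp [weight, new, Leg.ofWithin]

end IsRoute

theorem exists_weight_thresholds {θ : ℝ} (hθ : 0 < θ) (hL : 2 * θ ≤ weight L) :
    ∃ f h, f ≤ h ∧ (weight (L.take f) : ℝ) < θ ∧ θ ≤ weight (L.take (f + 1)) ∧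
      (weight (L.drop (h + 1)) : ℝ) < θ ∧ θ ≤ weight (L.drop h) := by
  obtain ⟨f, hf, hf'⟩ := Nat.exists_not_and_succ_of_not_zero_of_exists
    (p := fun n => θ ≤ weight (L.take n)) (by simpa [weight] using hθ)
    ⟨L.length, by rw [List.take_length]; linarith⟩
  obtain ⟨h, hh, hh'⟩ := Nat.exists_not_and_succ_of_not_zero_of_exists
    (p := fun n => (weight (L.drop n) : ℝ) < θ) (by rw [List.drop_zero]; linarith)
    ⟨L.length, by simpa [weight] using hθ⟩
  rw [not_le] at hf
  refine ⟨f, h, ?_, hf, hf', hh', not_lt.1 hh⟩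
  by_contra! hhf
  have hdrop : (weight (L.drop f) : ℝ) ≤ weight (L.drop (h + 1)) :=
    mod_cast weight_mono (List.drop_sublist_drop_left L hhf)
  have hsum : (weight L : ℝ) = weight (L.take f) + weight (L.drop f) := by
    rw [← Nat.cast_add, ← weight_append, List.take_append_drop]
  linarith

open scoped Classical in
/-- The union of the clouds of the legs. -/
noncomputable def clouds (L : List (Leg G F lam ρ)) : Finset V :=
  L.toFinset.biUnion Leg.cloud

theorem mem_clouds : v ∈ clouds L ↔ ∃ l ∈ L, v ∈ l.cloud := by
  simp [clouds]

open scoped Classical in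
theorem weight_eq_sum_countP {S : Finset V} (hS : ∀ l ∈ L, l.cloud ⊆ S) :
    weight L = ∑ v ∈ S, L.countP fun l => v ∈ l.cloud := by
  induction L with
  | nil => simp [weight]
  | cons l L ih =>
    rw [List.forall_mem_cons] at hS
    have hl : #l.cloud = ∑ v ∈ S, if v ∈ l.cloud then 1 else 0 := by
      rw [← card_filter, filter_mem_eq_inter, inter_eq_right.2 hS.1]
    simp only [List.countP_cons, decide_eq_true_eq, sum_add_distrib, ← ih hS.2, ← hl]
    simp [weight, add_comm]

open scoped Classical in
theorem weight_le_mul_card_clouds (hL : ∀ v, L.countP (fun l => v ∈ l.cloud) ≤ m) :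
    weight L ≤ m * #(clouds L) := by
  rw [weight_eq_sum_countP fun l hl v hv => mem_clouds.2 ⟨l, hl, hv⟩, mul_comm, ← smul_eq_mul]
  exact sum_le_card_nsmul _ _ _ fun v _ => hL v

namespace IsRoute

theorem weight_le_of_sublist (hL : IsRoute K m s t L) (h : L₁.Sublist L) :
    weight L₁ ≤ m * #(clouds L₁) :=
  weight_le_mul_card_clouds fun v => (h.countP_le).trans (hL.countP_le v)

theorem exists_lighter_or_exists_pairs (hL : IsRoute K m s t L) (hFG : F ≤ G)
    (hF : IsSpanner G F M) {θ : ℝ} (hθ : 0 < θ) (hweight : 2 * θ ≤ weight L) :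
    (∃ L' : List (Leg G F lam ρ),
      IsRoute (2 * K + 4 * ((M + 1) * ρ)) m s t L' ∧ weight L' ≤ 2 * θ) ∨
    ∃ A B : Finset V, θ ≤ m * #A ∧ θ ≤ m * #B ∧ ∀ u ∈ A, ∀ v ∈ B,
      Within G (G.dist s t + K + ρ) s u ∧ Within G (G.dist s t + K + 2 * ρ) u v ∧
      ¬ ApproxDist G F (K + 2 * ρ + 2 * (M * ρ)) u v ∧
      ApproxDist G (F ⊔ extras L) (K + 2 * ρ + 2 * (M * ρ)) u v := by
  obtain ⟨f, h, hfh, hf, hf', hh, hh'⟩ := exists_weight_thresholds hθ hweight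
  have hindex : ∀ u ∈ clouds (L.take (f + 1)), ∀ v ∈ clouds (L.drop h),
      ∃ (i j : ℕ) (hij : i ≤ j) (hj : j < L.length), i ≤ f ∧ h ≤ j ∧
        u ∈ (L[i]'(hij.trans_lt hj)).cloud ∧ v ∈ L[j].cloud := by
    intro u hu v hv
    obtain ⟨l, hl, hu⟩ := mem_clouds.1 hu
    obtain ⟨l', hl', hv⟩ := mem_clouds.1 hv
    obtain ⟨i, hi, rfl⟩ := List.mem_take_iff_getElem.1 hl
    obtain ⟨j, hj, rfl⟩ := List.mem_drop_iff_getElem.1 hl'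
    exact ⟨i, h + j, by omega, by omega, by omega, by omega, hu, hv⟩
  by_cases hgood : ∃ u ∈ clouds (L.take (f + 1)), ∃ v ∈ clouds (L.drop h),
      ApproxDist G F (K + 2 * ρ + 2 * (M * ρ)) u v
  · obtain ⟨u, hu, v, hv, huv⟩ := hgood
    obtain ⟨i, j, hij, hj, hif, hhj, hu, hv⟩ := hindex u hu v hv
    obtain ⟨L', hL', hweight'⟩ := hL.exists_shortcut hFG hF hij hj hu hv huv
    have htake : (weight (L.take i) : ℝ) ≤ weight (L.take f) :=
      mod_cast weight_mono (List.take_sublist_take_left hif)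
    have hdrop : (weight (L.drop (j + 1)) : ℝ) ≤ weight (L.drop (h + 1)) :=
      mod_cast weight_mono (List.drop_sublist_drop_left L (by omega))
    refine .inl ⟨L', hL', ?_⟩
    rw [hweight', Nat.cast_add]
    linarith
  · push Not at hgood
    refine .inr ⟨clouds (L.take (f + 1)), clouds (L.drop h),
      hf'.trans (mod_cast hL.weight_le_of_sublist (L.take_sublist _)),
      hh'.trans (mod_cast hL.weight_le_of_sublist (L.drop_sublist _)), fun u hu v hv => ?_⟩
    obtain ⟨i, j, hij, hj, -, -, hu', hv'⟩ := hindex u hu v hv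
    exact ⟨(hL.within_of_mem_clouds hFG hij hj hu' hv').1,
      (hL.within_of_mem_clouds hFG hij hj hu' hv').2, hgood u hu v hv,
      hL.approxDist_of_mem_clouds hFG hF hij hj hu' hv'⟩

end IsRoute

theorem card_le_of_sub_le {I : Finset ℕ} {k : ℕ} (h : ∀ i ∈ I, ∀ j ∈ I, j - i ≤ k) :
    #I ≤ k + 1 := by
  rcases I.eq_empty_or_nonempty with rfl | hI
  · simp
  have hsub : I ⊆ Icc (I.min' hI) (I.min' hI + k) := fun j hj => by
    have := h _ (I.min'_mem hI) j hj
    exact mem_Icc.2 ⟨I.min'_le j hj, by omega⟩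
  exact (card_le_card hsub).trans_eq (by rw [Nat.card_Icc]; omega)

theorem connects_map_range {leg : ℕ → Leg G F lam ρ} (h : ∀ i, (leg i).tgt = (leg (i + 1)).src)
    (p : ℕ) : Connects (leg 0).src (leg p).src ((List.range p).map leg) := by
  induction p with
  | zero => rfl
  | succ p ih =>
    rw [List.range_succ, List.map_append, Connects.append_iff]
    exact ⟨_, ih, rfl, h p⟩

/-- A geodesic, sampled at every `r`-th vertex. -/
theorem exists_waypoints {r : ℕ} (hr : 0 < r) (hst : G.Reachable s t) :
    ∃ (y : ℕ → V) (p : ℕ), y 0 = s ∧ y p = t ∧ (∀ q, G.dist s t ≤ q * r → p ≤ q) ∧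
      (∀ i, Within G r (y i) (y (i + 1))) ∧
      (∑ i ∈ range p, G.dist (y i) (y (i + 1)) = G.dist s t) ∧
      ∀ i j, i ≤ j → j < p → G.dist (y i) (y j) = (j - i) * r := by
  obtain ⟨y, hy0, hyt, hy⟩ := exists_geodesic hst
  let p := G.dist s t ⌈/⌉ r
  have hp : ∀ q, p ≤ q ↔ G.dist s t ≤ q * r := fun q => by
    rw [ceilDiv_le_iff_le_mul hr, mul_comm]
  have hstep : ∀ i, G.Reachable (y (i * r)) (y ((i + 1) * r)) ∧
      G.dist (y (i * r)) (y ((i + 1) * r)) =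
        min ((i + 1) * r) (G.dist s t) - min (i * r) (G.dist s t) :=
    fun i => hy _ _ (Nat.mul_le_mul_right r i.le_succ)
  have hsum : ∀ q, ∑ i ∈ range q, G.dist (y (i * r)) (y ((i + 1) * r)) =
      min (q * r) (G.dist s t) := by
    intro q
    induction q with
    | zero => simp
    | succ q ih =>
      rw [sum_range_succ, ih, (hstep q).2, add_one_mul]
      omega
  have hDp : G.dist s t ≤ p * r := (hp p).1 le_rfl
  refine ⟨fun i => y (i * r), p, by simpa using hy0, hyt _ hDp, fun q => (hp q).2, fun i => ?_,
    (hsum p).trans (min_eq_right hDp), fun i j hij hj => ?_⟩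
  · refine (Within.of_reachable (hstep i).1).mono ?_
    rw [(hstep i).2, add_one_mul]
    omega
  · have hjD : j * r < G.dist s t := not_le.1 fun hle => hj.not_ge ((hp j).2 hle)
    have hij' : i * r ≤ j * r := Nat.mul_le_mul_right r hij
    rw [(hy _ _ hij').2, min_eq_left hjD.le, min_eq_left (hij'.trans hjD.le), Nat.sub_mul]

variable [Fintype V]

theorem Completable.exists_isRoute {r e c R K₀ : ℕ} (h : Completable G F r e (c * r) lam)
    (hr : 0 < r) (hst : Within G (R * r) s t) (hK : R * e ≤ K₀) :
    ∃ L : List (Leg G F lam ((c + 1) * r)), IsRoute K₀ (2 * c + 1) s t L := by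
  classical
  obtain ⟨y, p, hy0, hyp, hp, hstep, hsum, hdist⟩ := exists_waypoints hr hst.reachable
  choose E hEG hE happrox using fun i => h (hstep i)
  let leg : ℕ → Leg G F lam ((c + 1) * r) := fun i =>
    { src := y i
      tgt := y (i + 1)
      len := G.dist (y i) (y (i + 1)) + e
      extra := E i
      cloud := closedBall G (c * r) (y i)
      within_len := happrox i
      extra_le := hEG i
      ncard_extra_le := hE i
      within_src := fun v hv => (mem_closedBall.1 hv).mono (by gcongr; omega)
      within_tgt := fun v hv => ((hstep i).symm.trans (mem_closedBall.1 hv)).mono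
        (by rw [add_one_mul, add_comm]) }
  refine ⟨(List.range p).map leg, ?_, ?_, fun v => ?_⟩
  · have hconn : Connects (y 0) (y p) ((List.range p).map leg) :=
      connects_map_range (leg := leg) (fun _ => rfl) p
    rwa [hy0, hyp] at hconn
  · have hlen : totalLen ((List.range p).map leg) = G.dist s t + p * e := calc
      totalLen ((List.range p).map leg) = ∑ i ∈ range p, (G.dist (y i) (y (i + 1)) + e) := by
        rw [totalLen, List.map_map]; rfl
      _ = G.dist s t + p * e := by rw [sum_add_distrib, hsum]; simp
    have hpe : p * e ≤ R * e := Nat.mul_le_mul_right e (hp R hst.dist_le)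
    omega
  · have hcount : ((List.range p).map leg).countP (fun l => v ∈ l.cloud) =
        #{i ∈ range p | v ∈ closedBall G (c * r) (y i)} := by
      rw [List.countP_map, List.countP_eq_length_filter]; rfl
    rw [hcount]
    refine card_le_of_sub_le fun i hi j hj => ?_
    rw [mem_filter, mem_range, mem_closedBall] at hi hj
    rcases le_total j i with hji | hij
    · omega
    have hclose := (hi.2.trans hj.2.symm).dist_le
    rw [hdist i j hij hj.1, ← add_mul] at hclose
    have := Nat.le_of_mul_le_mul_right hclose hr
    omega

end Routes

section Saturation

variable {F' F₀ : SimpleGraph V} {d Q q : ℕ}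

/-- No subgraph of `G` properly containing `F` has its additional edges paid for by the increase of
the potential `Φ` at the rate of `P` edges per unit. -/
def Saturated (G F : SimpleGraph V) (Φ : SimpleGraph V → ℝ) (P : ℝ) : Prop :=
  ∀ ⦃F'⦄, F ≤ F' → F' ≤ G → (F'.edgeSet.ncard : ℝ) ≤ F.edgeSet.ncard + P * (Φ F' - Φ F) → F' ≤ F

theorem exists_saturated [Finite V] (Φ : SimpleGraph V → ℝ) (P : ℝ) (hF₀ : F₀ ≤ G) :
    ∃ F, F₀ ≤ F ∧ F ≤ G ∧ (F.edgeSet.ncard : ℝ) ≤ F₀.edgeSet.ncard + P * (Φ F - Φ F₀) ∧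
      Saturated G F Φ P := by
  let affordable : Set (SimpleGraph V) :=
    {F | F ≤ G ∧ (F.edgeSet.ncard : ℝ) ≤ F₀.edgeSet.ncard + P * (Φ F - Φ F₀)}
  obtain ⟨F, hF₀F, ⟨hFG, hF⟩, hmax⟩ :=
    (Set.toFinite affordable).exists_le_maximal ⟨hF₀, by simp⟩
  exact ⟨F, hF₀F, hFG, hF, fun F' hFF' hF'G hF' => hmax ⟨hF'G, by linarith⟩ hFF'⟩

variable [Fintype V]

open scoped Classical in
/-- The proportion of vertices `v` of the ball of radius `d` about `u` whose distance from `u` in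
`F` is correct up to `g`. -/
noncomputable def goodFraction (G F : SimpleGraph V) (d g : ℕ) (u : V) : ℝ :=
  #{v ∈ closedBall G d u | ApproxDist G F g u v} / #(closedBall G d u)

theorem goodFraction_nonneg : 0 ≤ goodFraction G F d g u := by
  rw [goodFraction]
  positivity

theorem goodFraction_le_one : goodFraction G F d g u ≤ 1 := by
  classical exact div_le_one_of_le₀ (mod_cast card_filter_le _ _) (Nat.cast_nonneg _)

theorem goodFraction_add_le (hFF' : F ≤ F') {B : Finset V}
    (hB : ∀ v ∈ B, Within G d u v ∧ ¬ ApproxDist G F g u v ∧ ApproxDist G F' g u v) :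
    goodFraction G F d g u + #B / #(closedBall G d u) ≤ goodFraction G F' d g u := by
  classical
  have hdisj : Disjoint {v ∈ closedBall G d u | ApproxDist G F g u v} B :=
    disjoint_left.2 fun v hv hvB => (hB v hvB).2.1 (mem_filter.1 hv).2
  rw [goodFraction, goodFraction, ← add_div, ← Nat.cast_add, ← card_union_of_disjoint hdisj]
  gcongr
  refine union_subset (monotone_filter_right _ fun v _ hv => hv.mono_graph hFF') fun v hv => ?_
  exact mem_filter.2 ⟨mem_closedBall.2 (hB v hv).1, (hB v hv).2.2⟩

theorem goodFraction_mono (hFF' : F ≤ F') : goodFraction G F d g u ≤ goodFraction G F' d g u := by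
  simpa using goodFraction_add_le (G := G) (d := d) (g := g) (u := u) hFF' (B := ∅) (by simp)

/-- The potential of `F`: the goodness of `F` at each of the `Q` error levels `g 0, …, g (Q - 1)`,
summed over all vertices. -/
noncomputable def potential (G : SimpleGraph V) (d : ℕ) (g : ℕ → ℕ) (Q : ℕ) (F : SimpleGraph V) :
    ℝ :=
  ∑ q ∈ range Q, ∑ u, goodFraction G F d (g q) u

variable {g : ℕ → ℕ}

theorem potential_nonneg : 0 ≤ potential G d g Q F :=
  sum_nonneg fun _ _ => sum_nonneg fun _ _ => goodFraction_nonneg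

theorem potential_le : potential G d g Q F ≤ Q * Fintype.card V := by
  calc potential G d g Q F ≤ ∑ _q ∈ range Q, ∑ _u : V, 1 :=
        sum_le_sum fun _ _ => sum_le_sum fun _ _ => goodFraction_le_one
    _ = Q * Fintype.card V := by simp

theorem potential_add_le (hFF' : F ≤ F') (hq : q < Q) {A B : Finset V} {β : ℝ}
    (hβ : ∀ u ∈ A, #(closedBall G d u) ≤ β)
    (hAB : ∀ u ∈ A, ∀ v ∈ B,
      Within G d u v ∧ ¬ ApproxDist G F (g q) u v ∧ ApproxDist G F' (g q) u v) :
    potential G d g Q F + #A * #B / β ≤ potential G d g Q F' := by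
  classical
  have hq' := mem_range.2 hq
  have hA : ∑ u ∈ A, (goodFraction G F d (g q) u + #B / β) ≤
      ∑ u ∈ A, goodFraction G F' d (g q) u := sum_le_sum fun u hu => by
    refine le_trans ?_ (goodFraction_add_le hFF' (hAB u hu))
    have := card_closedBall_pos (G := G) (a := d) (u := u)
    have := hβ u hu
    gcongr
  have hAc : ∑ u ∈ Aᶜ, goodFraction G F d (g q) u ≤ ∑ u ∈ Aᶜ, goodFraction G F' d (g q) u :=
    sum_le_sum fun u _ => goodFraction_mono hFF'
  have hrest : ∑ p ∈ (range Q).erase q, ∑ u, goodFraction G F d (g p) u ≤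
      ∑ p ∈ (range Q).erase q, ∑ u, goodFraction G F' d (g p) u :=
    sum_le_sum fun p _ => sum_le_sum fun u _ => goodFraction_mono hFF'
  rw [sum_add_distrib, sum_const, nsmul_eq_mul, ← mul_div_assoc] at hA
  rw [potential, potential, ← add_sum_erase _ _ hq', ← add_sum_erase _ _ hq',
    ← sum_add_sum_compl A, ← sum_add_sum_compl A]
  linarith

end Saturation

section Shortcutting

/-- The additive error after `q` rounds of shortcutting, each of which doubles the error and
adds `L` to it. -/
def shortcutError (L K₀ : ℕ) : ℕ → ℕ
  | 0 => K₀
  | q + 1 => 2 * shortcutError L K₀ q + L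

theorem shortcutError_mono (L K₀ : ℕ) : Monotone (shortcutError L K₀) :=
  monotone_nat_of_le_succ fun q => by rw [shortcutError]; omega

theorem shortcutError_mul_right (L K₀ r q : ℕ) :
    shortcutError (L * r) (K₀ * r) q = shortcutError L K₀ q * r := by
  induction q with
  | zero => rfl
  | succ q ih => rw [shortcutError, shortcutError, ih]; ring

/-- Here `S` is the weight of a route, so that `lam * S` bounds the number of its additional edges,
and `a * b / β` is the gain in potential from approximating the `a * b` pairs between its two ends,
`β` being the size of a ball. -/
theorem charge_le {lam lam' ε m S a b β : ℝ} (hlam : 0 ≤ lam) (hlam' : 0 < lam') (hε : 0 < ε)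
    (hβ : 0 < β) (hS : 0 ≤ S) (hβS : lam' * β ≤ lam * S) (ha : ε * S ≤ m * a) (hb : ε * S ≤ m * b) :
    lam * S ≤ (lam * m / ε) ^ 2 / lam' * (a * b / β) := by
  have hab : (ε * S) * (ε * S) ≤ (m * a) * (m * b) :=
    mul_le_mul ha hb (by positivity) (ha.trans' (by positivity))
  calc lam * S ≤ lam * S * (lam * S) / (lam' * β) := by
        rw [le_div_iff₀ (by positivity)]
        gcongr
    _ = lam ^ 2 * ((ε * S) * (ε * S)) / (ε ^ 2 * (lam' * β)) := by field_simp
    _ ≤ lam ^ 2 * ((m * a) * (m * b)) / (ε ^ 2 * (lam' * β)) := by gcongr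
    _ = (lam * m / ε) ^ 2 / lam' * (a * b / β) := by field_simp

variable [Fintype V] {lam lam' ε : ℝ} {d K m ρ q Q : ℕ} {g : ℕ → ℕ} {s t : V}
  {L : List (Leg G F lam ρ)}

/-- Otherwise the additional edges of the route would be paid for by the pairs of vertices whose
approximation they improve. -/
theorem Saturated.exists_lighter
    (hsat : Saturated G F (potential G d g Q) ((lam * m / ε) ^ 2 / lam')) (hFG : F ≤ G)
    (hF : IsSpanner G F M) (hL : IsRoute K m s t L) (hlam : 0 ≤ lam) (hlam' : 0 < lam')
    (hε : 0 < ε) (hε' : ε ≤ 1 / 2) (hq : q < Q) (hg : g q = K + 2 * ρ + 2 * (M * ρ))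
    (hd : G.dist s t + K + 2 * ρ ≤ d) (hpos : 0 < weight L)
    (hweight : lam' * #(closedBall G (G.dist s t + K + ρ + d) s) ≤ lam * weight L) :
    ∃ L' : List (Leg G F lam ρ), IsRoute (2 * K + 4 * ((M + 1) * ρ)) m s t L' ∧
      weight L' ≤ 2 * ε * weight L := by
  have hθ : 0 < ε * weight L := by positivity
  rcases hL.exists_lighter_or_exists_pairs hFG hF hθ
    (by nlinarith [(Nat.cast_nonneg (weight L) : (0 : ℝ) ≤ weight L)]) with
    ⟨L', hL', hlight⟩ | ⟨A, B, hA, hB, hAB⟩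
  · exact ⟨L', hL', by rwa [mul_assoc]⟩
  exfalso
  have hnonempty : ∀ C : Finset V, ε * weight L ≤ m * #C → C.Nonempty := fun C hC => by
    refine nonempty_iff_ne_empty.2 fun h => ?_
    rw [h, card_empty, Nat.cast_zero, mul_zero] at hC
    exact hC.not_gt hθ
  obtain ⟨u, hu⟩ := hnonempty A hA
  obtain ⟨v, hv⟩ := hnonempty B hB
  have hgain := potential_add_le (G := G) (d := d) (g := g) (F' := F ⊔ extras L) le_sup_left hq
    (A := A) (B := B) (β := #(closedBall G (G.dist s t + K + ρ + d) s))
    (fun u hu => mod_cast card_le_card (closedBall_subset fun w hw => (hAB u hu v hv).1.trans hw))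
    (fun u hu v hv => ⟨(hAB u hu v hv).2.1.mono hd, by rw [hg]; exact (hAB u hu v hv).2.2⟩)
  have hedges : ((F ⊔ extras L).edgeSet.ncard : ℝ) ≤ F.edgeSet.ncard +
      (lam * m / ε) ^ 2 / lam' * (potential G d g Q (F ⊔ extras L) - potential G d g Q F) := by
    calc ((F ⊔ extras L).edgeSet.ncard : ℝ) ≤ F.edgeSet.ncard + (extras L).edgeSet.ncard :=
          mod_cast ncard_edgeSet_sup_le F (extras L)
      _ ≤ F.edgeSet.ncard + lam * weight L := by gcongr; exact ncard_extras_le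
      _ ≤ _ := by
        have hcharge :=
          charge_le hlam hlam' hε card_closedBall_pos (Nat.cast_nonneg _) hweight hA hB
        refine add_le_add_right (hcharge.trans ?_) _
        gcongr
        linarith
  exact (hAB u hu v hv).2.2.1 ((hAB u hu v hv).2.2.2.mono_graph
    (hsat le_sup_left (sup_le hFG extras_le) hedges))

end Shortcutting

section Scaling

variable [Fintype V] {F₀ : SimpleGraph V} {lam lam' ε : ℝ} {c d e K₀ m r ρ Q R : ℕ} {s t : V}
  {L : List (Leg G F lam ρ)}

/-- After `Q` rounds of shortcutting, a route that remained expensive throughout would have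
weight less than `1`. -/
theorem Saturated.exists_cheap {K : ℕ → ℕ}
    (hsat : Saturated G F (potential G d (fun q => K q + 2 * ρ + 2 * (M * ρ)) Q)
      ((lam * m / ε) ^ 2 / lam'))
    (hFG : F ≤ G) (hF : IsSpanner G F M) (hK : K = shortcutError (4 * ((M + 1) * ρ)) K₀)
    (hL : IsRoute K₀ m s t L) (hlam : 0 ≤ lam) (hlam' : 0 < lam') (hε : 0 < ε) (hε' : ε ≤ 1 / 2)
    (hQ : (2 * ε) ^ Q * (m * Fintype.card V) < 1) (hd : G.dist s t + K Q + 2 * ρ ≤ d) :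
    ∃ L' : List (Leg G F lam ρ), IsRoute (K Q) m s t L' ∧
      lam * weight L' ≤ lam' * #(closedBall G (G.dist s t + K Q + ρ + d) s) := by
  have hKmono : Monotone K := hK ▸ shortcutError_mono _ _
  by_contra! hexpensive
  suffices hrounds : ∀ q ≤ Q, ∃ L' : List (Leg G F lam ρ), IsRoute (K q) m s t L' ∧
      weight L' ≤ (2 * ε) ^ q * (m * Fintype.card V) by
    obtain ⟨L', hL', hweight⟩ := hrounds Q le_rfl
    have hzero : weight L' = 0 := Nat.lt_one_iff.1 (mod_cast hweight.trans_lt hQ)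
    have hlt := hexpensive L' hL'
    rw [hzero, Nat.cast_zero, mul_zero] at hlt
    exact hlt.not_ge (by positivity)
  intro q
  induction q with
  | zero =>
    refine fun _ => ⟨L, by rwa [hK], ?_⟩
    rw [pow_zero, one_mul]
    exact_mod_cast (hL.weight_le_of_sublist (.refl L)).trans
      (Nat.mul_le_mul_left m (card_le_univ _))
  | succ q ih =>
    intro hq
    obtain ⟨L', hL', hweight⟩ := ih (by omega)
    have hKq : K q ≤ K Q := hKmono (by omega)
    have hlt := hexpensive L' (hL'.mono hKq)
    have hpos : 0 < weight L' := Nat.pos_of_ne_zero fun hzero => by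
      rw [hzero, Nat.cast_zero, mul_zero] at hlt
      exact hlt.not_ge (by positivity)
    have hball : #(closedBall G (G.dist s t + K q + ρ + d) s) ≤
        #(closedBall G (G.dist s t + K Q + ρ + d) s) :=
      card_le_card (closedBall_subset fun w hw => hw.mono (by omega))
    obtain ⟨L'', hL'', hlight⟩ := hsat.exists_lighter hFG hF hL' hlam hlam' hε hε' hq rfl
      (by omega) hpos (hlt.le.trans' (by gcongr))
    refine ⟨L'', by rwa [hK, shortcutError, ← hK], hlight.trans ?_⟩
    rw [pow_succ', mul_assoc (2 * ε)]
    exact mul_le_mul_of_nonneg_left hweight (by positivity)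

theorem Completable.exists_scaled (h : Completable G F₀ r e (c * r) lam) (hF₀G : F₀ ≤ G)
    (hF₀ : IsSpanner G F₀ M) (hr : 0 < r) (hK₀ : R * e ≤ K₀) (hlam : 0 ≤ lam) (hlam' : 0 < lam')
    (hε : 0 < ε) (hε' : ε ≤ 1 / 2)
    (hQ : (2 * ε) ^ Q * ((2 * c + 1 : ℕ) * Fintype.card V) < 1) {K : ℕ}
    (hK : K = shortcutError (4 * ((M + 1) * ((c + 1) * r))) K₀ Q) :
    ∃ F, F₀ ≤ F ∧ F ≤ G ∧ (F.edgeSet.ncard : ℝ) ≤ F₀.edgeSet.ncard +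
        (lam * (2 * c + 1 : ℕ) / ε) ^ 2 / lam' * (Q * Fintype.card V) ∧
      Completable G F (R * r) K (2 * (R * r + K) + 3 * ((c + 1) * r)) lam' := by
  let ρ := (c + 1) * r
  let d := R * r + K + 2 * ρ
  let Φ := potential G d
    (fun q => shortcutError (4 * ((M + 1) * ρ)) K₀ q + 2 * ρ + 2 * (M * ρ)) Q
  obtain ⟨F, hF₀F, hFG, hF, hsat⟩ :=
    exists_saturated Φ ((lam * (2 * c + 1 : ℕ) / ε) ^ 2 / lam') hF₀G
  refine ⟨F, hF₀F, hFG, hF.trans ?_, fun s t hst => ?_⟩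
  · gcongr
    have hnonneg : 0 ≤ Φ F₀ := potential_nonneg
    have hle : Φ F ≤ Q * Fintype.card V := potential_le
    linarith
  obtain ⟨L, hL⟩ := (h.mono_graph hF₀F).exists_isRoute hr hst hK₀
  have hdist := hst.dist_le
  obtain ⟨L', hL', hcheap⟩ := hsat.exists_cheap hFG (hF₀.mono_graph hF₀F) rfl hL hlam hlam' hε hε'
    hQ (by rw [← hK]; omega)
  rw [← hK] at hL' hcheap
  refine ⟨extras L', extras_le, ncard_extras_le.trans (hcheap.trans ?_), hL'.approxDist⟩
  gcongr
  exact closedBall_subset fun w hw => hw.mono (by omega)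

end Scaling

section Iteration

theorem shrink_pow_mul_lt_one {n z : ℝ} {c Q : ℕ} (hz : 0 < z) (hQ : 0 < Q) (hn : n ≤ z ^ Q) :
    (2 * (4 * (c + 1) * z)⁻¹) ^ Q * ((2 * c + 1 : ℕ) * n) < 1 := by
  have hbase : (2 * c + 1 : ℝ) < (2 * (c + 1)) ^ Q :=
    (by linarith : (2 * c + 1 : ℝ) < 2 * (c + 1)).trans_le
      (le_self_pow₀ (by linarith [(Nat.cast_nonneg c : (0 : ℝ) ≤ c)]) hQ.ne')
  have hshrink : 2 * (4 * (c + 1) * z)⁻¹ = (2 * (c + 1) * z)⁻¹ := by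
    field_simp
    norm_num
  rw [hshrink, inv_pow, inv_mul_lt_one₀ (by positivity), mul_pow]
  push_cast
  calc (2 * c + 1) * n ≤ (2 * c + 1) * z ^ Q := by gcongr
    _ < (2 * (c + 1)) ^ Q * z ^ Q := by gcongr

theorem Completable.exists_scaled_of_card_le [Fintype V] {r e c R Q α κ : ℕ} {lam lam' z : ℝ}
    (h : Completable G F r e (c * r) lam) (hFG : F ≤ G) (hF : IsSpanner G F M) (hr : 0 < r)
    (hR : 0 < R) (hα : R * e ≤ α * r) (hlam : 0 ≤ lam) (hlam' : 0 < lam') (hz : 1 ≤ z)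
    (hQ : 0 < Q) (hn : (Fintype.card V : ℝ) ≤ z ^ Q)
    (hκ : κ = shortcutError (4 * ((M + 1) * (c + 1))) α Q) :
    ∃ F', F ≤ F' ∧ F' ≤ G ∧ (F'.edgeSet.ncard : ℝ) ≤ F.edgeSet.ncard +
        (4 * (c + 1) * (2 * c + 1) * (lam * z)) ^ 2 / lam' * (Q * Fintype.card V) ∧
      Completable G F' (R * r) (κ * r) ((2 * κ + 3 * c + 5) * (R * r)) lam' := by
  have hε : (4 * (c + 1) * z)⁻¹ ≤ 1 / 2 := by
    rw [one_div]
    gcongr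
    nlinarith [(Nat.cast_nonneg c : (0 : ℝ) ≤ c)]
  have hκr : κ * r = shortcutError (4 * ((M + 1) * ((c + 1) * r))) (α * r) Q := by
    rw [hκ, ← shortcutError_mul_right]
    simp only [mul_assoc]
  obtain ⟨F', hFF', hF'G, hF', hcomp⟩ := h.exists_scaled hFG hF hr hα hlam hlam'
    (by positivity) hε (shrink_pow_mul_lt_one (by positivity) hQ hn) hκr
  refine ⟨F', hFF', hF'G, hF'.trans_eq ?_, hcomp.mono_radius hlam'.le ?_⟩
  · rw [div_inv_eq_mul]
    push_cast
    ring
  · calc 2 * (R * r + κ * r) + 3 * ((c + 1) * r)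
      _ = 2 * (R * r) + (2 * κ + 3 * (c + 1)) * r := by ring
      _ ≤ 2 * (R * r) + (2 * κ + 3 * (c + 1)) * (R * r) := by
        gcongr
        exact Nat.le_mul_of_pos_left r hR
      _ = (2 * κ + 3 * c + 5) * (R * r) := by ring

theorem inv_pow_sq_div_inv_pow (i : ℕ) {y : ℝ} (hy : y ≠ 0) :
    ((y ^ (2 ^ (i + 1) - 1))⁻¹) ^ 2 / (y ^ (2 ^ (i + 2) - 1))⁻¹ = y := by
  have hexp : 2 ^ (i + 2) - 1 = (2 ^ (i + 1) - 1) * 2 + 1 := by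
    have := Nat.one_le_two_pow (n := i + 1)
    rw [pow_succ 2 (i + 1)]
    omega
  rw [hexp, pow_succ y, pow_mul]
  field_simp

/-- Each of the `i` scalings by `R` replaces `lam` by `lam ^ 2 / y`, starting from `lam = y⁻¹`. -/
theorem exists_completable_pow {Q : ℕ} (hQ : 0 < Q) (i : ℕ) :
    ∃ (α c : ℕ) (C : ℝ), 0 ≤ C ∧ ∀ (V : Type u) [Fintype V] (G : SimpleGraph V) (y z : ℝ) (R : ℕ),
      1 ≤ y → 1 ≤ z → (Fintype.card V : ℝ) ≤ z ^ Q → 0 < R →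
      ∃ F ≤ G, IsSpanner G F (2 * Q) ∧
        (F.edgeSet.ncard : ℝ) ≤ C * (Fintype.card V * (y * z ^ 2)) ∧
        ∃ e, R * e ≤ α * R ^ i ∧
          Completable G F (R ^ i) e (c * R ^ i) (y ^ (2 ^ (i + 1) - 1))⁻¹ := by
  induction i with
  | zero =>
    refine ⟨0, 1, 2, by norm_num, fun V _ G y z R hy hz hn _ => ?_⟩
    obtain ⟨T, hTG, hT, hspan⟩ := exists_isSpanner G (by positivity) hQ hn
    obtain ⟨L, hLG, hL, hcomp⟩ := exists_completable_one G (y := y) (by positivity)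
    refine ⟨T ⊔ L, sup_le hTG hLG, hspan.mono_graph le_sup_left, ?_, 0, by simp,
      by simpa using hcomp _ le_sup_right⟩
    have hsup : ((T ⊔ L).edgeSet.ncard : ℝ) ≤ T.edgeSet.ncard + L.edgeSet.ncard :=
      mod_cast ncard_edgeSet_sup_le T L
    have hzz : z ≤ z ^ 2 := le_self_pow₀ hz two_ne_zero
    have hz' : z * Fintype.card V ≤ y * z ^ 2 * Fintype.card V := by gcongr; nlinarith
    have hy' : y * Fintype.card V ≤ y * z ^ 2 * Fintype.card V := by gcongr; nlinarith
    linarith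
  | succ i ih =>
    obtain ⟨α, c, C, hC, ih⟩ := ih
    let κ := shortcutError (4 * ((2 * Q + 1) * (c + 1))) α Q
    refine ⟨κ, 2 * κ + 3 * c + 5, C + Q * (4 * (c + 1) * (2 * c + 1)) ^ 2, by positivity,
      fun V _ G y z R hy hz hn hR => ?_⟩
    obtain ⟨F, hFG, hspan, hF, e, he, hcomp⟩ := ih V G y z R hy hz hn hR
    obtain ⟨F', hFF', hF'G, hF', hcomp'⟩ := hcomp.exists_scaled_of_card_le hFG hspan
      (Nat.pow_pos hR) hR he (by positivity) (lam' := (y ^ (2 ^ (i + 2) - 1))⁻¹) (by positivity)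
      hz hQ hn rfl
    rw [← pow_succ'] at hcomp'
    refine ⟨F', hF'G, hspan.mono_graph hFF', ?_, κ * R ^ i, by rw [pow_succ']; linarith, hcomp'⟩
    calc (F'.edgeSet.ncard : ℝ) ≤ _ := hF'
      _ = F.edgeSet.ncard + Q * (4 * (c + 1) * (2 * c + 1)) ^ 2 * (Fintype.card V *
            ((y ^ (2 ^ (i + 1) - 1))⁻¹ ^ 2 / (y ^ (2 ^ (i + 2) - 1))⁻¹ * z ^ 2)) := by ring
      _ ≤ (C + Q * (4 * (c + 1) * (2 * c + 1)) ^ 2) * (Fintype.card V * (y * z ^ 2)) := by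
        rw [inv_pow_sq_div_inv_pow i (by positivity), add_mul]
        gcongr

end Iteration

section Assembly

theorem le_rpow_div_pow {n p q : ℝ} {Q : ℕ} (hn : 1 ≤ n) (hp : 0 < p) (hq : 0 < q)
    (hQ : q / p ≤ Q) : n ≤ (n ^ (p / q)) ^ Q := by
  rw [← Real.rpow_mul_natCast (by positivity)]
  refine Real.self_le_rpow_of_one_le hn ?_
  calc 1 = p / q * (q / p) := by field_simp
    _ ≤ p / q * Q := by gcongr

theorem mul_rpow_mul_rpow_sq {n δ N : ℝ} (hn : 0 < n) (hδ : 0 < δ) (hN : 0 < N) :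
    n * (2 * n ^ (1 / N) * (n ^ (δ / (2 * N))) ^ 2) = 2 * n ^ (1 + (1 + δ) / N) := by
  rw [← Real.rpow_mul_natCast hn.le, mul_assoc, ← Real.rpow_add hn, mul_left_comm,
    ← Real.rpow_one_add' hn.le (by positivity)]
  congr 2
  push_cast
  field_simp

/-- With `y = 2 * n ^ (1 / N)` the budget `n / y ^ N` of the last scale is less than one edge. -/
theorem exists_approxDist_of_within {δ : ℝ} (hδ : 0 < δ) {k : ℕ} (hk : k ≠ 0) :
    ∃ (α : ℕ) (C : ℝ), 0 ≤ C ∧ ∀ (V : Type u) [Fintype V] [Nonempty V] (G : SimpleGraph V) (R : ℕ),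
      0 < R → ∃ F ≤ G, (F.edgeSet.ncard : ℝ) ≤
        C * (Fintype.card V : ℝ) ^ ((1 : ℝ) + (1 + δ) / (2 ^ (k + 1) - 1)) ∧
        ∀ s t, Within G (R ^ k) s t → ApproxDist G F (α * R ^ (k - 1)) s t := by
  obtain ⟨N, hN⟩ : ∃ N, 2 ^ (k + 1) - 1 = N := ⟨_, rfl⟩
  have hpow : 1 < 2 ^ (k + 1) := Nat.one_lt_two_pow k.succ_ne_zero
  have hNcast : (2 ^ (k + 1) - 1 : ℝ) = N := by
    rw [← hN, Nat.cast_pred (by positivity)]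
    norm_cast
  have hN0 : N ≠ 0 := by omega
  have hNpos : (0 : ℝ) < N := by positivity
  rw [hNcast]
  obtain ⟨Q, hQ⟩ := exists_nat_ge (2 * N / δ)
  have hQpos : (0 : ℝ) < Q := hQ.trans_lt' (by positivity)
  obtain ⟨α, c, C, hC, hlevel⟩ := exists_completable_pow.{u} (mod_cast hQpos) k
  refine ⟨α, C * 2, by positivity, fun V _ _ G R hR => ?_⟩
  have hn : (1 : ℝ) ≤ Fintype.card V := Nat.one_le_cast.2 Fintype.card_pos
  let y : ℝ := 2 * (Fintype.card V : ℝ) ^ (1 / (N : ℝ))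
  let z : ℝ := (Fintype.card V : ℝ) ^ (δ / (2 * N))
  have hy : 1 ≤ y := by linarith [Real.one_le_rpow hn (by positivity : 0 ≤ 1 / (N : ℝ))]
  have hz : 1 ≤ z := Real.one_le_rpow hn (by positivity)
  have hyN : Fintype.card V < y ^ N := by
    rw [mul_pow, one_div, Real.rpow_inv_natCast_pow (by positivity) hN0]
    exact lt_mul_of_one_lt_left (by positivity) (one_lt_pow₀ one_lt_two hN0)
  obtain ⟨F, hFG, -, hF, e, he, hcomp⟩ :=
    hlevel V G y z R hy hz (le_rpow_div_pow hn hδ (by positivity) hQ) hR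
  refine ⟨F, hFG, ?_, fun s t hst => ?_⟩
  · rwa [mul_assoc, ← mul_rpow_mul_rpow_sq (by positivity) hδ hNpos]
  have he' : e ≤ α * R ^ (k - 1) := by
    rw [← Nat.succ_pred_eq_of_ne_zero hk, pow_succ', mul_left_comm] at he
    exact Nat.le_of_mul_le_mul_left he hR
  refine (hcomp.approxDist (by positivity) ?_ hst).mono (by gcongr)
  rw [hN]
  exact (inv_mul_lt_one₀ (by positivity)).2 hyN

theorem exists_log_add_two_le {γ : ℝ} (hγ : 0 < γ) :
    ∃ C : ℝ, 0 ≤ C ∧ ∀ n : ℕ, n ≠ 0 → (Nat.log 2 n + 2 : ℝ) ≤ C * (n : ℝ) ^ γ := by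
  refine ⟨1 / (γ * Real.log 2) + 2, by positivity, fun n hn => ?_⟩
  have hone : 1 ≤ (n : ℝ) ^ γ := Real.one_le_rpow (mod_cast Nat.one_le_iff_ne_zero.2 hn) hγ.le
  have hlog : (Nat.log 2 n : ℝ) ≤ 1 / (γ * Real.log 2) * (n : ℝ) ^ γ := calc
    (Nat.log 2 n : ℝ) ≤ Real.log n / Real.log 2 := mod_cast Real.natLog_le_logb n 2
    _ ≤ (n : ℝ) ^ γ / γ / Real.log 2 := by
      gcongr
      exact Real.log_le_rpow_div n.cast_nonneg hγ
    _ = 1 / (γ * Real.log 2) * (n : ℝ) ^ γ := by field_simp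
  linarith

theorem exists_approxDist_of_dyadic {δ : ℝ} (hδ : 0 < δ) {k : ℕ} (hk : k ≠ 0) :
    ∃ (α : ℕ) (C : ℝ), 0 ≤ C ∧ ∀ (V : Type u) [Fintype V] [Nonempty V] (G : SimpleGraph V),
      ∃ H ≤ G, (H.edgeSet.ncard : ℝ) ≤
        C * (Fintype.card V : ℝ) ^ ((1 : ℝ) + (1 + δ) / (2 ^ (k + 1) - 1)) ∧
        ∀ j < Nat.log 2 (Fintype.card V) + 2, ∀ s t, Within G ((2 ^ j) ^ k) s t →
          ApproxDist G H (α * (2 ^ j) ^ (k - 1)) s t := by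
  have hN : 0 < (2 ^ (k + 1) - 1 : ℝ) := sub_pos.2 (one_lt_pow₀ one_lt_two k.succ_ne_zero)
  obtain ⟨α, C, hC, hscale⟩ := exists_approxDist_of_within.{u} (half_pos hδ) hk
  obtain ⟨C', hC', hlog⟩ := exists_log_add_two_le (div_pos (half_pos hδ) hN)
  refine ⟨α, C' * C, by positivity, fun V _ _ G => ?_⟩
  choose F hFG hF happrox using fun j : ℕ => hscale V G (2 ^ j) (by positivity)
  have hn : (0 : ℝ) < Fintype.card V := mod_cast Fintype.card_pos
  set n := Fintype.card V
  refine ⟨⨆ j ∈ range (Nat.log 2 n + 2), F j, iSup₂_le fun j _ => hFG j, ?_,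
    fun j hj s t hst => (happrox j s t hst).mono_graph
      (le_iSup₂_of_le j (mem_range.2 hj) le_rfl)⟩
  calc ((⨆ j ∈ range (Nat.log 2 n + 2), F j).edgeSet.ncard : ℝ)
      ≤ ∑ j ∈ range (Nat.log 2 n + 2), ((F j).edgeSet.ncard : ℝ) :=
        mod_cast ncard_edgeSet_biSup_le _ F
    _ ≤ (Nat.log 2 n + 2) * (C * (n : ℝ) ^ ((1 : ℝ) + (1 + δ / 2) / (2 ^ (k + 1) - 1))) := by
        refine (sum_le_card_nsmul _ _ _ fun j _ => hF j).trans_eq ?_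
        rw [card_range, nsmul_eq_mul]
        norm_cast
    _ ≤ C' * (n : ℝ) ^ (δ / 2 / (2 ^ (k + 1) - 1)) *
          (C * (n : ℝ) ^ ((1 : ℝ) + (1 + δ / 2) / (2 ^ (k + 1) - 1))) := by
        gcongr
        exact hlog n (mod_cast hn.ne')
    _ = C' * C * (n : ℝ) ^ ((1 : ℝ) + (1 + δ) / (2 ^ (k + 1) - 1)) := by
        rw [mul_mul_mul_comm, ← Real.rpow_add hn]
        congr 2
        field_simp
        ring

theorem pow_pred_le_rpow {p q : ℝ} {k : ℕ} (hk : k ≠ 0) (hp : 0 ≤ p) (h : p ^ k ≤ q) :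
    p ^ (k - 1) ≤ q ^ (1 - 1 / (k : ℝ)) := by
  have hk' : (1 : ℝ) ≤ k := mod_cast Nat.one_le_iff_ne_zero.2 hk
  calc p ^ (k - 1) = (p ^ k) ^ (1 - 1 / (k : ℝ)) := by
        rw [← Real.rpow_natCast_mul hp, ← Real.rpow_natCast]
        congr 1
        rw [Nat.cast_pred (Nat.pos_of_ne_zero hk)]
        field_simp
    _ ≤ q ^ (1 - 1 / (k : ℝ)) := by
        have : 1 / (k : ℝ) ≤ 1 := (div_le_one (by positivity)).2 hk'
        gcongr

theorem exists_dyadic_scale {k n D : ℕ} (hk : k ≠ 0) (hD : D ≠ 0) (hDn : D ≤ n) :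
    ∃ j < Nat.log 2 n + 2, D ≤ (2 ^ j) ^ k ∧
      ((2 : ℝ) ^ j) ^ (k - 1) ≤ 2 ^ k * (D : ℝ) ^ (1 - 1 / (k : ℝ)) := by
  have hb : 1 < 2 ^ k := Nat.one_lt_two_pow hk
  refine ⟨Nat.clog (2 ^ k) D, ?_, ?_, ?_⟩
  · refine Nat.lt_succ_of_le ((Nat.clog_le_iff_le_pow hb).2 ?_)
    calc D ≤ 2 ^ (Nat.log 2 n + 1) := hDn.trans (Nat.lt_pow_succ_log_self one_lt_two n).le
      _ ≤ (2 ^ k) ^ (Nat.log 2 n + 1) := by gcongr; exact Nat.le_self_pow hk 2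
  · rw [pow_right_comm]
    exact Nat.le_pow_clog hb D
  · have hle : (2 ^ Nat.clog (2 ^ k) D) ^ k ≤ 2 ^ k * D := by
      rw [pow_right_comm]
      rcases eq_or_ne D 1 with rfl | hD1
      · simpa using hb.le
      · have hpred := (Nat.pow_pred_clog_lt_self hb (by omega : 1 < D)).le
        have hpos := Nat.clog_pos hb (by omega : 2 ≤ D)
        rw [← Nat.succ_pred_eq_of_pos hpos, pow_succ']
        gcongr
    have hroot : 0 ≤ 1 / (k : ℝ) := by positivity
    calc ((2 : ℝ) ^ Nat.clog (2 ^ k) D) ^ (k - 1) ≤ (2 ^ k * D) ^ (1 - 1 / (k : ℝ)) :=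
          pow_pred_le_rpow hk (by positivity) (mod_cast hle)
      _ = (2 ^ k) ^ (1 - 1 / (k : ℝ)) * (D : ℝ) ^ (1 - 1 / (k : ℝ)) :=
          Real.mul_rpow (by positivity) (by positivity)
      _ ≤ 2 ^ k * (D : ℝ) ^ (1 - 1 / (k : ℝ)) := by
          gcongr
          exact Real.rpow_le_self_of_one_le (one_le_pow₀ one_le_two) (by linarith)

theorem dist_le_of_approxDist_of_dyadic [Fintype V] {k α : ℕ} (hk : k ≠ 0)
    (hH : ∀ j < Nat.log 2 (Fintype.card V) + 2, ∀ s t, Within G ((2 ^ j) ^ k) s t →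
      ApproxDist G H (α * (2 ^ j) ^ (k - 1)) s t) (huv : G.Reachable u v) :
    H.Reachable u v ∧
      (H.dist u v : ℝ) ≤ G.dist u v + α * 2 ^ k * (G.dist u v : ℝ) ^ (1 - 1 / (k : ℝ)) := by
  rcases eq_or_ne u v with rfl | hne
  · refine ⟨.refl u, ?_⟩
    simp only [SimpleGraph.dist_self, Nat.cast_zero, zero_add]
    positivity
  have hcard : G.dist u v ≤ Fintype.card V := by
    obtain ⟨p, hp, hlen⟩ := huv.exists_path_of_dist
    exact hlen ▸ hp.length_lt.le
  obtain ⟨j, hj, hDj, hjD⟩ := exists_dyadic_scale hk (huv.pos_dist_of_ne hne).ne' hcard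
  have happrox := hH j hj u v ((Within.of_reachable huv).mono hDj)
  refine ⟨happrox.reachable, ?_⟩
  calc (H.dist u v : ℝ) ≤ G.dist u v + α * (2 ^ j) ^ (k - 1) := mod_cast happrox.dist_le
    _ ≤ G.dist u v + α * (2 ^ k * (G.dist u v : ℝ) ^ (1 - 1 / (k : ℝ))) := by gcongr
    _ = _ := by rw [mul_assoc]

end Assembly

end AdditiveSpanner

theorem sublinear_additive_spanner_general (δ : ℝ) (hδ : 0 < δ) (k : ℕ) (hk : 1 ≤ k) :
    ∃ C : ℝ, 0 < C ∧
      ∀ (V : Type u) [Fintype V] (G : SimpleGraph V),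
        ∃ H : SimpleGraph V, H ≤ G ∧
          (H.edgeSet.ncard : ℝ) ≤
            C * (Fintype.card V : ℝ) ^ ((1 : ℝ) + (1 + δ) / (2 ^ (k + 1) - 1)) ∧
          ∀ u v : V, G.Reachable u v →
            H.Reachable u v ∧
            (H.dist u v : ℝ) ≤ (G.dist u v : ℝ) +
              C * (G.dist u v : ℝ) ^ ((1 : ℝ) - 1 / (k : ℝ)) := by
  have hk' : k ≠ 0 := by omega
  obtain ⟨α, C, hC, hspanner⟩ := AdditiveSpanner.exists_approxDist_of_dyadic.{u} hδ hk'
  refine ⟨C + α * 2 ^ k + 1, by positivity, fun V _ G => ?_⟩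
  rcases isEmpty_or_nonempty V
  · refine ⟨⊥, bot_le, ?_, isEmptyElim⟩
    rw [SimpleGraph.edgeSet_bot, Set.ncard_empty, Nat.cast_zero]
    positivity
  obtain ⟨H, hHG, hH, happrox⟩ := hspanner V G
  refine ⟨H, hHG, hH.trans ?_, fun u v huv => ?_⟩
  · gcongr
    linarith [(by positivity : (0 : ℝ) ≤ α * 2 ^ k)]
  · obtain ⟨hreach, hdist⟩ := AdditiveSpanner.dist_le_of_approxDist_of_dyadic hk' happrox huv
    refine ⟨hreach, hdist.trans ?_⟩
    gcongr
    linarith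

/-- **Almost-optimal sublinear additive spanners.**
For every constant `δ > 0` and integer `k ≥ 2`, there is a constant `C`
(depending only on `δ` and `k`) such that every finite simple graph `G` on `n`
vertices has a subgraph `H ⊆ G` with at most `C · n^(1 + (1+δ)/(2^(k+1) − 1))`
edges, such that for every pair of vertices connected in `G`,
`dist_H(u,v) ≤ dist_G(u,v) + C · dist_G(u,v)^(1 − 1/k)`. -/
theorem sublinear_additive_spanner (δ : ℝ) (hδ : 0 < δ) (k : ℕ) (hk : 2 ≤ k) :
    ∃ C : ℝ, 0 < C ∧
      ∀ (V : Type) [Fintype V] (G : SimpleGraph V),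
        ∃ H : SimpleGraph V, H ≤ G ∧
          (H.edgeSet.ncard : ℝ) ≤
            C * (Fintype.card V : ℝ) ^ ((1 : ℝ) + (1 + δ) / (2 ^ (k + 1) - 1)) ∧
          ∀ u v : V, G.Reachable u v →
            H.Reachable u v ∧
            (H.dist u v : ℝ) ≤ (G.dist u v : ℝ) +
              C * (G.dist u v : ℝ) ^ ((1 : ℝ) - 1 / (k : ℝ)) :=
  sublinear_additive_spanner_general δ hδ k (by omega)
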